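/- Let $C$ be a symmetric $n \times n$ real matrix. Then $\alpha_C^{\mathrm{Nest}} \le \alpha_{Q_C}^{\mathrm{cop}}$, where $\alpha_C^{\mathrm{Nest}} = \inf\{ C \bullet W : W \text{ symmetric } n \times n \text{ positive semidefinite, and there exists } u \in \mathbb{R}^n \text{ with } u_i \ge 0,\ \sum_i u_i = 1,\ \operatorname{Diag}(u) - W \text{ positive semidefinite}\}$ and $\alpha_{Q_C}^{\mathrm{cop}} = \inf\{ Q_C \bullet X : X \text{ symmetric } 2n \times 2n \text{ positive semidefinite},\ X_{ij} \ge 0 \text{ for all } i,j,\ \sum_{i,j} X_{ij} = 1 \}$ with $Q_C = \begin{pmatrix} C & -C \\ -C & C \end{pmatrix}$. -/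

import Mathlib

open Matrix

/-- The compression `Y₁₁ - Y₁₂ - Y₂₁ + Y₂₂` of a block matrix along `x ↦ (x, -x)`. -/
def signedCompression {ι : Type*} (Y : Matrix (ι ⊕ ι) (ι ⊕ ι) ℝ) : Matrix ι ι ℝ :=
  Y.toBlocks₁₁ - Y.toBlocks₁₂ - Y.toBlocks₂₁ + Y.toBlocks₂₂

lemma signedCompression_apply {ι : Type*} (Y : Matrix (ι ⊕ ι) (ι ⊕ ι) ℝ) (i j : ι) :
    signedCompression Y i j = Y (Sum.inl i) (Sum.inl j) - Y (Sum.inl i) (Sum.inr j)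
      - Y (Sum.inr i) (Sum.inl j) + Y (Sum.inr i) (Sum.inr j) :=
  rfl

lemma dotProduct_mulVec_eq_sum {ι : Type*} [Fintype ι] (A : Matrix ι ι ℝ) (x : ι → ℝ) :
    x ⬝ᵥ A *ᵥ x = ∑ i, ∑ j, x i * A i j * x j := by
  simp only [dotProduct, mulVec, Finset.mul_sum, mul_assoc]

lemma dotProduct_signedCompression_mulVec {ι : Type*} [Fintype ι]
    (Y : Matrix (ι ⊕ ι) (ι ⊕ ι) ℝ) (x : ι → ℝ) :
    x ⬝ᵥ signedCompression Y *ᵥ x = Sum.elim x (-x) ⬝ᵥ Y *ᵥ Sum.elim x (-x) := by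
  simp only [dotProduct_mulVec_eq_sum, Fintype.sum_sum_type, Sum.elim_inl, Sum.elim_inr,
    signedCompression_apply, Pi.neg_apply, ← Finset.sum_add_distrib]
  refine Finset.sum_congr rfl fun i _ => Finset.sum_congr rfl fun j _ => by ring

lemma signedCompression_diagonal_sub {ι : Type*} [DecidableEq ι] (r : ι ⊕ ι → ℝ)
    (Y : Matrix (ι ⊕ ι) (ι ⊕ ι) ℝ) :
    signedCompression (diagonal r - Y) =
      diagonal (fun i => r (Sum.inl i) + r (Sum.inr i)) - signedCompression Y := by
  ext i j
  by_cases h : i = j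
  · subst h
    simp only [signedCompression_apply, Matrix.sub_apply, diagonal_apply_eq, ne_eq, reduceCtorEq,
      not_false_eq_true, diagonal_apply_ne]
    ring
  · simp only [signedCompression_apply, Matrix.sub_apply, diagonal_apply, Sum.inl.injEq,
      Sum.inr.injEq, reduceCtorEq, h, if_false]
    ring

/-- The weighted Laplacian of a symmetric entrywise nonnegative matrix is positive semidefinite. -/
lemma dotProduct_diagonal_rowSum_sub_mulVec_nonneg {ι : Type*} [Fintype ι] [DecidableEq ι]
    {Y : Matrix ι ι ℝ} (hsymm : Yᵀ = Y) (hnonneg : ∀ i j, 0 ≤ Y i j) (x : ι → ℝ) :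
    0 ≤ x ⬝ᵥ (diagonal (fun i => ∑ j, Y i j) - Y) *ᵥ x := by
  have hdiag : x ⬝ᵥ diagonal (fun i => ∑ j, Y i j) *ᵥ x = ∑ i, ∑ j, Y i j * x i ^ 2 := by
    simp only [dotProduct, mulVec_diagonal, Finset.sum_mul, Finset.mul_sum]
    exact Finset.sum_congr rfl fun i _ => Finset.sum_congr rfl fun j _ => by ring
  have hswap : ∑ i, ∑ j, Y i j * x i ^ 2 = ∑ i, ∑ j, Y i j * x j ^ 2 := by
    rw [Finset.sum_comm]
    refine Finset.sum_congr rfl fun i _ => Finset.sum_congr rfl fun j _ => ?_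
    rw [← congrFun₂ hsymm i j, transpose_apply]
  have hsq : 0 ≤ ∑ i, ∑ j, Y i j * (x i - x j) ^ 2 :=
    Finset.sum_nonneg fun i _ => Finset.sum_nonneg fun j _ =>
      mul_nonneg (hnonneg i j) (sq_nonneg _)
  have hexpand : ∑ i, ∑ j, Y i j * (x i - x j) ^ 2 =
      ∑ i, ∑ j, Y i j * x i ^ 2 + ∑ i, ∑ j, Y i j * x j ^ 2
        - 2 * ∑ i, ∑ j, x i * Y i j * x j := by
    simp only [Finset.mul_sum, ← Finset.sum_add_distrib, ← Finset.sum_sub_distrib]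
    exact Finset.sum_congr rfl fun i _ => Finset.sum_congr rfl fun j _ => by ring
  rw [sub_mulVec, dotProduct_sub, hdiag, dotProduct_mulVec_eq_sum]
  linarith

lemma sum_fromBlocks_mul_eq_sum_mul_signedCompression {ι : Type*} [Fintype ι]
    (C : Matrix ι ι ℝ) (Y : Matrix (ι ⊕ ι) (ι ⊕ ι) ℝ) :
    ∑ i, ∑ j, fromBlocks C (-C) (-C) C i j * Y i j =
      ∑ i, ∑ j, C i j * signedCompression Y i j := by
  simp only [Fintype.sum_sum_type, ← Finset.sum_add_distrib]
  refine Finset.sum_congr rfl fun i _ => Finset.sum_congr rfl fun j _ => ?_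
  simp only [fromBlocks_apply₁₁, fromBlocks_apply₁₂, fromBlocks_apply₂₁, fromBlocks_apply₂₂,
    signedCompression_apply, Matrix.neg_apply]
  ring

lemma transpose_signedCompression {ι : Type*} (Y : Matrix (ι ⊕ ι) (ι ⊕ ι) ℝ) :
    (signedCompression Y)ᵀ = signedCompression Yᵀ := by
  ext i j
  simp only [signedCompression_apply, transpose_apply]
  ring

lemma dotProduct_mulVec_single_add_smul_single {ι : Type*} [Fintype ι] [DecidableEq ι]
    {A : Matrix ι ι ℝ} (hA : Aᵀ = A) (i j : ι) (t : ℝ) :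
    (Pi.single i 1 + t • Pi.single j 1) ⬝ᵥ A *ᵥ (Pi.single i 1 + t • Pi.single j 1) =
      A i i + 2 * t * A i j + t ^ 2 * A j j := by
  have hji : A j i = A i j := congrFun₂ hA i j
  simp only [mulVec_add, mulVec_smul, mulVec_single_one, dotProduct_add, add_dotProduct,
    smul_dotProduct, dotProduct_smul, single_one_dotProduct, col_apply, smul_eq_mul, hji]
  ring

/-- A symmetric matrix `W` with `0 ≼ W ≼ Diag u` and `u ≤ 1` has entries of modulus at most one. -/
lemma abs_apply_le_one_of_le_diagonal {ι : Type*} [Fintype ι] [DecidableEq ι]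
    {W : Matrix ι ι ℝ} (hsymm : Wᵀ = W) (hpsd : ∀ x : ι → ℝ, 0 ≤ x ⬝ᵥ W *ᵥ x)
    {u : ι → ℝ} (hu : ∀ i, u i ≤ 1)
    (hle : ∀ x : ι → ℝ, 0 ≤ x ⬝ᵥ (diagonal u - W) *ᵥ x) (i j : ι) : |W i j| ≤ 1 := by
  have hdiag : ∀ k, W k k ≤ 1 := fun k => by
    have h := hle (Pi.single k 1)
    simp only [mulVec_single_one, single_one_dotProduct, col_apply, Matrix.sub_apply,
      diagonal_apply_eq] at h
    linarith [hu k]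
  have hplus := hpsd (Pi.single i 1 + (1 : ℝ) • Pi.single j 1)
  have hminus := hpsd (Pi.single i 1 + (-1 : ℝ) • Pi.single j 1)
  rw [dotProduct_mulVec_single_add_smul_single hsymm] at hplus hminus
  rw [abs_le]
  constructor <;> linarith [hdiag i, hdiag j]

/-- Theorem 1 (first part): Nesterov's bound never exceeds the copositive bound,
`α_C^Nest ≤ α_{Q_C}^cop`. -/
theorem stmt_7 (n : ℕ) (C : Matrix (Fin n) (Fin n) ℝ) (hC : Cᵀ = C) :
    sInf {r : ℝ | ∃ W : Matrix (Fin n) (Fin n) ℝ, Wᵀ = W ∧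
        (∀ x : Fin n → ℝ, 0 ≤ x ⬝ᵥ W *ᵥ x) ∧
        (∃ u : Fin n → ℝ, (∀ i, 0 ≤ u i) ∧ (∑ i, u i) = 1 ∧
          ∀ x : Fin n → ℝ, 0 ≤ x ⬝ᵥ (Matrix.diagonal u - W) *ᵥ x) ∧
        r = ∑ i, ∑ j, C i j * W i j} ≤
    sInf {r : ℝ | ∃ X : Matrix (Fin n ⊕ Fin n) (Fin n ⊕ Fin n) ℝ, Xᵀ = X ∧
        (∀ x : Fin n ⊕ Fin n → ℝ, 0 ≤ x ⬝ᵥ X *ᵥ x) ∧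
        (∀ i j, 0 ≤ X i j) ∧ (∑ i, ∑ j, X i j) = 1 ∧
        r = ∑ i, ∑ j, fromBlocks C (-C) (-C) C i j * X i j} := by
  rcases n.eq_zero_or_pos with rfl | hn
  · simp
  refine csInf_le_csInf ?_ ?_ ?_
  · refine ⟨-∑ i, ∑ j, |C i j|, ?_⟩
    rintro r ⟨W, hsymm, hpsd, ⟨u, hu, hsum, hle⟩, rfl⟩
    have hu_le : ∀ i, u i ≤ 1 := fun i =>
      hsum ▸ Finset.single_le_sum (fun k _ => hu k) (Finset.mem_univ i)
    simp only [← Finset.sum_neg_distrib]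
    refine Finset.sum_le_sum fun i _ => Finset.sum_le_sum fun j _ => ?_
    have hW := abs_apply_le_one_of_le_diagonal hsymm hpsd hu_le hle i j
    have hmul : |C i j * W i j| ≤ |C i j| := by
      rw [abs_mul]
      exact mul_le_of_le_one_right (abs_nonneg _) hW
    exact (abs_le.mp hmul).1
  · let a : Fin n ⊕ Fin n := Sum.inl ⟨0, hn⟩
    have hsingle : 0 ≤ (Pi.single a 1 : Fin n ⊕ Fin n → ℝ) := Pi.single_nonneg.mpr zero_le_one
    refine ⟨_, diagonal (Pi.single a 1), diagonal_transpose _, fun x => ?_, fun i j => ?_, ?_, rfl⟩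
    · simp only [dotProduct, mulVec_diagonal]
      refine Finset.sum_nonneg fun i _ => ?_
      rw [mul_left_comm]
      exact mul_nonneg (hsingle i) (mul_self_nonneg _)
    · rw [diagonal_apply]
      split_ifs
      exacts [hsingle i, le_rfl]
    · simp only [diagonal_apply, Finset.sum_ite_eq, Finset.mem_univ, if_true,
        Finset.sum_pi_single']
  · rintro r ⟨X, hsymm, hpsd, hnonneg, hsum, rfl⟩
    refine ⟨signedCompression X, by rw [transpose_signedCompression, hsymm], fun x => ?_,
      ⟨fun i => ∑ b, X (Sum.inl i) b + ∑ b, X (Sum.inr i) b, fun i => ?_, ?_, fun x => ?_⟩,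
      sum_fromBlocks_mul_eq_sum_mul_signedCompression C X⟩
    · rw [dotProduct_signedCompression_mulVec]
      exact hpsd _
    · exact add_nonneg (Finset.sum_nonneg fun b _ => hnonneg _ b)
        (Finset.sum_nonneg fun b _ => hnonneg _ b)
    · rw [Finset.sum_add_distrib, ← hsum, Fintype.sum_sum_type]
    · rw [← signedCompression_diagonal_sub (fun a => ∑ b, X a b) X,
        dotProduct_signedCompression_mulVec]
      exact dotProduct_diagonal_rowSum_sub_mulVec_nonneg hsymm hnonneg _
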